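/- arXiv:math/0702837 — 3 statements merged into one kernel-verified Lean document; each statement's English description precedes it below -/
import Mathlib

section
/- Let G1 and G2 be connected simple graphs on vertex types V1 and V2, and let S1 ⊆ V1 and S2 ⊆ V2 be convex sets of vertices in G1 and G2 respectively. Then the set S1 × S2 is convex in the box product graph G1 □ G2: any two vertices of S1 × S2 are joined in G1 □ G2 by a walk whose length equals their graph distance in G1 □ G2 and all of whose vertices lie in S1 × S2. -/
/-!
Distances in a box product are the sums of the distances in the factors (`edist_boxProd`). Hence a
geodesic of `G1` inside `S1`, followed in the first coordinate, and then a geodesic of `G2` inside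
`S2`, followed in the second coordinate, form a geodesic of `G1 □ G2`, and it stays in `S1 ×ˢ S2`
because the coordinate at rest is always an endpoint.
-/

open SimpleGraph

def SimpleGraph.IsConvexSet {V : Type*} (G : SimpleGraph V) (S : Set V) : Prop :=
  ∀ u v : V, u ∈ S → v ∈ S → ∃ w : G.Walk u v, w.length = G.dist u v ∧
    ∀ x ∈ w.support, x ∈ S

theorem boxProd_convex {V1 V2 : Type*} (G1 : SimpleGraph V1) (G2 : SimpleGraph V2)
    (h1 : G1.Connected) (h2 : G2.Connected) (S1 : Set V1) (S2 : Set V2)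
    (hS1 : G1.IsConvexSet S1) (hS2 : G2.IsConvexSet S2) :
    (G1 □ G2).IsConvexSet (S1 ×ˢ S2) := by
  rintro ⟨u1, u2⟩ ⟨v1, v2⟩ ⟨hu1, hu2⟩ ⟨hv1, hv2⟩
  obtain ⟨w1, hl1, hs1⟩ := hS1 u1 v1 hu1 hv1
  obtain ⟨w2, hl2, hs2⟩ := hS2 u2 v2 hu2 hv2
  refine ⟨(w1.boxProdLeft G2 u2).append (w2.boxProdRight G1 v1), ?_, ?_⟩
  · have hd : (G1 □ G2).dist (u1, u2) (v1, v2) = G1.dist u1 v1 + G2.dist u2 v2 := by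
      -- Connectedness makes both `edist`s finite, so that `toNat` is additive here.
      simp only [SimpleGraph.dist, edist_boxProd]
      exact ENat.toNat_add (edist_ne_top_iff_reachable.2 (h1 u1 v1))
        (edist_ne_top_iff_reachable.2 (h2 u2 v2))
    have e1 : (w1.boxProdLeft G2 u2).length = w1.length := Walk.length_map _ _
    have e2 : (w2.boxProdRight G1 v1).length = w2.length := Walk.length_map _ _
    rw [Walk.length_append, e1, e2, hl1, hl2, hd]
  · intro x hx
    have e1 : (w1.boxProdLeft G2 u2).support = w1.support.map (fun y => (y, u2)) :=
      Walk.support_map _ _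
    have e2 : (w2.boxProdRight G1 v1).support = w2.support.map (fun y => (v1, y)) :=
      Walk.support_map _ _
    rw [Walk.mem_support_append_iff, e1, e2, List.mem_map, List.mem_map] at hx
    rcases hx with ⟨y, hy, rfl⟩ | ⟨y, hy, rfl⟩
    · exact ⟨hs1 y hy, hu2⟩
    · exact ⟨hv1, hs2 y hy⟩
end

section
/- Let G be a connected simple graph on a vertex type V, let T ⊆ V be totally geodesic in G, and let S ⊆ T be a set of vertices that is convex in the induced subgraph of G on T. Then S is convex in G: any two vertices of S are joined in G by a walk whose length equals dist_G between them and all of whose vertices lie in S. -/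
/-! A geodesic of `G` between two vertices of `T` stays in `T`, so it is also a walk of the induced
subgraph. Hence distances between vertices of `T` in the induced subgraph are at most those in `G`,
and a geodesic of the induced subgraph remains a geodesic when viewed in `G`. -/

open SimpleGraph

def SimpleGraph.IsTotallyGeodesicSet {V : Type*} (G : SimpleGraph V) (S : Set V) : Prop :=
  ∀ u v : V, u ∈ S → v ∈ S → ∀ w : G.Walk u v, w.length = G.dist u v →
    ∀ x ∈ w.support, x ∈ S

theorem convex_in_totallyGeodesic_is_convex {V : Type*} (G : SimpleGraph V)
    (hG : G.Connected) (T : Set V) (hT : G.IsTotallyGeodesicSet T)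
    (S : Set T) (hS : (G.induce T).IsConvexSet S) :
    G.IsConvexSet (Subtype.val '' S) := by
  rintro _ _ ⟨u, hu, rfl⟩ ⟨v, hv, rfl⟩
  obtain ⟨w, hw, hwS⟩ := hS u v hu hv
  obtain ⟨p, hp⟩ := hG.exists_walk_length_eq_dist (u : V) (v : V)
  have hpT := hT u v u.2 v.2 p hp
  have hle : (G.induce T).dist u v ≤ G.dist u v := by
    have hlen : (p.induce T hpT).length = p.length := by
      have h := congrArg Walk.length (Walk.map_induce p hpT)
      exact (Walk.length_map _ _).symm.trans h
    exact (dist_le (p.induce T hpT)).trans (hlen.trans hp).le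
  refine ⟨w.map (Embedding.induce T).toHom, ?_, ?_⟩
  · apply le_antisymm
    · exact (Walk.length_map _ w).trans_le (hw.trans_le hle)
    · exact dist_le _
  · intro x hx
    obtain ⟨y, hy, rfl⟩ := List.mem_map.mp ((Walk.support_map _ w) ▸ hx)
    exact ⟨y, hwS y hy, rfl⟩
end

section
/- Let G1 and G2 be connected simple graphs on vertex types V1 and V2, and let f1 : ℤ → V1 and f2 : ℤ → V2 be isometric embeddings of the integer line, i.e. dist_{G1}(f1 m, f1 n) = |m - n| and dist_{G2}(f2 m, f2 n) = |m - n| for all integers m, n. Then the map (m, n) ↦ (f1 m, f2 n) is an isometric embedding of the grid graph on ℤ × ℤ into the box product G1 □ G2 (that is, dist_{G1 □ G2}((f1 m, f2 n), (f1 m', f2 n')) = |m - m'| + |n - n'| for all integers m, m', n, n'), and its image is convex in G1 □ G2. -/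
open SimpleGraph

/-!
Distances in a box product add up coordinatewise (`SimpleGraph.edist_boxProd`), which gives the
distance formula at once. For convexity, a geodesic line is traversed by a walk of length `|m - n|`
that stays on the line (`exists_walk_along_line`); moving first along the line in the first factor
and then along the line in the second factor gives a walk inside the plane whose length
`|m - m'| + |n - n'|` is the distance of its endpoints.
-/

/-- A map from `ℤ` sending consecutive integers to adjacent vertices carries integer intervals to
walks of the same length inside its range. -/
theorem exists_walk_along_line {V : Type*} {G : SimpleGraph V} {f : ℤ → V}
    (hadj : ∀ m : ℤ, G.Adj (f m) (f (m + 1))) (m n : ℤ) :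
    ∃ w : G.Walk (f m) (f n), w.length = (m - n).natAbs ∧ ∀ x ∈ w.support, x ∈ Set.range f := by
  have key : ∀ (k : ℕ) (m : ℤ), ∃ w : G.Walk (f m) (f (m + k)), w.length = k ∧
      ∀ x ∈ w.support, x ∈ Set.range f := by
    intro k
    induction k with
    | zero =>
      intro m
      refine ⟨Walk.nil.copy rfl (by simp), by simp, by simp⟩
    | succ k ih =>
      intro m
      obtain ⟨w, hw, hs⟩ := ih (m + 1)
      refine ⟨(Walk.cons (hadj m) w).copy rfl (by congr 1; push_cast; ring), by simp [hw], ?_⟩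
      intro x hx
      simp only [Walk.support_copy, Walk.support_cons, List.mem_cons] at hx
      rcases hx with rfl | hx
      · exact ⟨m, rfl⟩
      · exact hs x hx
  rcases le_total m n with h | h
  · obtain ⟨w, hw, hs⟩ := key (m - n).natAbs m
    refine ⟨w.copy rfl (by congr 1; omega), by simp [hw], by simpa using hs⟩
  · obtain ⟨w, hw, hs⟩ := key (m - n).natAbs n
    refine ⟨(w.copy rfl (by congr 1; omega)).reverse, by simp [hw], by simpa using hs⟩

theorem dist_boxProd_of_connected {V1 V2 : Type*} {G1 : SimpleGraph V1} {G2 : SimpleGraph V2}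
    (h1 : G1.Connected) (h2 : G2.Connected) (x y : V1 × V2) :
    (G1 □ G2).dist x y = G1.dist x.1 y.1 + G2.dist x.2 y.2 := by
  have h := edist_boxProd (G := G1) (H := G2) x y
  rw [← ((h1.boxProd h2).preconnected x y).coe_dist_eq_edist,
    ← (h1.preconnected x.1 y.1).coe_dist_eq_edist,
    ← (h2.preconnected x.2 y.2).coe_dist_eq_edist] at h
  exact_mod_cast h

theorem boxProd_of_geodesic_lines {V1 V2 : Type*} (G1 : SimpleGraph V1)
    (G2 : SimpleGraph V2) (h1 : G1.Connected) (h2 : G2.Connected)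
    (f1 : ℤ → V1) (f2 : ℤ → V2)
    (hf1 : ∀ m n : ℤ, G1.dist (f1 m) (f1 n) = (m - n).natAbs)
    (hf2 : ∀ m n : ℤ, G2.dist (f2 m) (f2 n) = (m - n).natAbs) :
    (∀ m m' n n' : ℤ,
      (G1 □ G2).dist (f1 m, f2 n) (f1 m', f2 n')
        = (m - m').natAbs + (n - n').natAbs) ∧
    (G1 □ G2).IsConvexSet (Set.range fun p : ℤ × ℤ => (f1 p.1, f2 p.2)) := by
  have hdist : ∀ m m' n n' : ℤ, (G1 □ G2).dist (f1 m, f2 n) (f1 m', f2 n')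
      = (m - m').natAbs + (n - n').natAbs := fun m m' n n' => by
    rw [dist_boxProd_of_connected h1 h2, hf1, hf2]
  refine ⟨hdist, ?_⟩
  have a1 : ∀ m : ℤ, G1.Adj (f1 m) (f1 (m + 1)) := fun m => by
    rw [← dist_eq_one_iff_adj, hf1]; omega
  have a2 : ∀ m : ℤ, G2.Adj (f2 m) (f2 (m + 1)) := fun m => by
    rw [← dist_eq_one_iff_adj, hf2]; omega
  rintro _ _ ⟨⟨m, n⟩, rfl⟩ ⟨⟨m', n'⟩, rfl⟩
  obtain ⟨w1, hw1, hs1⟩ := exists_walk_along_line a1 m m'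
  obtain ⟨w2, hw2, hs2⟩ := exists_walk_along_line a2 n n'
  refine ⟨(w1.boxProdLeft G2 (f2 n)).append (w2.boxProdRight G1 (f1 m')), ?_, ?_⟩
  · have l1 : (w1.boxProdLeft G2 (f2 n)).length = w1.length := Walk.length_map _ _
    have l2 : (w2.boxProdRight G1 (f1 m')).length = w2.length := Walk.length_map _ _
    rw [Walk.length_append, hdist]
    exact congrArg₂ (· + ·) (l1.trans hw1) (l2.trans hw2)
  · intro x hx
    have s1 : (w1.boxProdLeft G2 (f2 n)).support = w1.support.map fun a => (a, f2 n) :=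
      Walk.support_map _ _
    have s2 : (w2.boxProdRight G1 (f1 m')).support = w2.support.map fun b => (f1 m', b) :=
      Walk.support_map _ _
    have hx' : x ∈ w1.support.map (fun a => (a, f2 n)) ∨
        x ∈ w2.support.map (fun b => (f1 m', b)) := by
      rw [← s1, ← s2]
      exact (Walk.mem_support_append_iff _ _).1 hx
    rw [List.mem_map, List.mem_map] at hx'
    rcases hx' with ⟨y, hy, rfl⟩ | ⟨y, hy, rfl⟩
    · obtain ⟨k, rfl⟩ := hs1 y hy
      exact ⟨(k, n), rfl⟩
    · obtain ⟨k, rfl⟩ := hs2 y hy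
      exact ⟨(m', k), rfl⟩
end
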